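/- Inducing paths imply inseparability: let G = (V, E_d, E_bi) be a DMG and v, w ∈ V. If there exists an (asymmetric) inducing path from v to w in G, then ({v}, {w}, C) ∉ I_E^G for every C ⊆ V \ {v}; that is, w is inseparable from v in the independence model I_E^G. -/

import Mathlib

namespace ESepPaper

/-- A directed mixed graph: directed edges and bidirected edges over a node type `V`.
A directed graph (DG) is a DMG with `Ebi = ∅`. -/
structure DMG (V : Type) where
  Ed : Set (V × V)
  Ebi : Set (Sym2 V)

variable {V : Type}

/-- `G.ancestor u v` : there is a directed path `u → … → v` (possibly trivial). -/
def DMG.ancestor (G : DMG V) : V → V → Prop :=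
  Relation.ReflTransGen (fun u v => (u, v) ∈ G.Ed)

/-- Ancestors of a set `C`. -/
def DMG.anc (G : DMG V) (C : Set V) : Set V := {u | ∃ v ∈ C, G.ancestor u v}

/-- Strongly connected component of `v`. -/
def DMG.scc (G : DMG V) (v : V) : Set V := {w | G.ancestor w v ∧ G.ancestor v w}

/-- Parents of a set of nodes. -/
def DMG.pa (G : DMG V) (S : Set V) : Set V := {w | ∃ v ∈ S, (w, v) ∈ G.Ed}

/-- Kind of a traversed edge on a walk: forward directed, backward directed, or bidirected. -/
inductive LinkType | fwd | bwd | bi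
deriving DecidableEq

/-- Validity of a link of kind `t` between consecutive walk nodes `u` and `v`. -/
def DMG.linkOK (G : DMG V) (u v : V) : LinkType → Prop
  | .fwd => (u, v) ∈ G.Ed
  | .bwd => (v, u) ∈ G.Ed
  | .bi => s(u, v) ∈ G.Ebi

/-- Arrowhead at the second (right) endpoint of the link. -/
def LinkType.headR : LinkType → Prop
  | .fwd => True
  | .bwd => False
  | .bi => True

/-- Arrowhead at the first (left) endpoint of the link. -/
def LinkType.headL : LinkType → Prop
  | .fwd => False
  | .bwd => True
  | .bi => True

/-- Tail at the second (right) endpoint. -/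
def LinkType.tailR (t : LinkType) : Prop := t = .bwd

/-- Tail at the first (left) endpoint. -/
def LinkType.tailL (t : LinkType) : Prop := t = .fwd

/-- Walks in a DMG. -/
inductive DMG.Walk (G : DMG V) : V → V → Type
  | nil (v : V) : DMG.Walk G v v
  | cons {u v w : V} (t : LinkType) (h : G.linkOK u v t) (p : DMG.Walk G v w) : DMG.Walk G u w

/-- An interior node on a walk, whose incoming link is `t1` and outgoing link is `t2`,
is a collider iff both links have an arrowhead at it. -/
def colliderAt (t1 t2 : LinkType) : Prop := t1.headR ∧ t2.headL

/-- An interior non-collider `v` between neighbours `u` (incoming link `t1`) and `w`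
(outgoing link `t2`) is unblockable: on every side where the link has a tail at `v`, the
corresponding neighbour lies in `scc_G(v)` (left-chain/right-chain/fork cases). -/
def unblockableAt (G : DMG V) (u v w : V) (t1 t2 : LinkType) : Prop :=
  (t1.tailR → u ∈ G.scc v) ∧ (t2.tailL → w ∈ G.scc v)

namespace DMG.Walk

variable {G : DMG V}

/-- First node of a walk. -/
def first {a b : V} (_ : G.Walk a b) : V := a

def length : {a b : V} → G.Walk a b → ℕ
  | _, _, .nil _ => 0
  | _, _, .cons _ _ p => p.length + 1

def support : {a b : V} → G.Walk a b → List V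
  | a, _, .nil _ => [a]
  | a, _, .cons _ _ p => a :: p.support

/-- Auxiliary: σ-openness of the remainder of a walk, where `u` is the previous node and
`t1` the link from `u` into the current first node. -/
def sigmaOpenAux (C : Set V) : (u : V) → LinkType → {b c : V} → G.Walk b c → Prop
  | _, _, _, _, .nil _ => True
  | u, t1, v, _, .cons t2 _ q =>
      ((colliderAt t1 t2 → v ∈ G.anc C) ∧
       (¬ colliderAt t1 t2 → ¬ unblockableAt G u v q.first t1 t2 → v ∉ C)) ∧
      sigmaOpenAux C v t2 q

/-- The walk is σ-open given `C`: every collider on it is an ancestor of a node of `C`, and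
no blockable non-collider on it lies in `C`. -/
def sigmaOpen (C : Set V) : {a b : V} → G.Walk a b → Prop
  | _, _, .nil _ => True
  | a, _, .cons t _ q => sigmaOpenAux C a t q

/-- All links are forward directed. -/
def IsDirected : {a b : V} → G.Walk a b → Prop
  | _, _, .nil _ => True
  | _, _, .cons t _ p => t = .fwd ∧ p.IsDirected

/-- Interior nodes of the walk (all nodes except the two endpoints). -/
def interior {a b : V} (p : G.Walk a b) : List V := p.support.tail.dropLast

/-- Arrowhead at the first endpoint. -/
def headAtStart : {a b : V} → G.Walk a b → Prop
  | _, _, .nil _ => False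
  | _, _, .cons t _ _ => t.headL

def headAtEndAux : LinkType → {a b : V} → G.Walk a b → Prop
  | t, _, _, .nil _ => t.headR
  | _, _, _, .cons t _ q => headAtEndAux t q

/-- Arrowhead at the last endpoint. -/
def headAtEnd : {a b : V} → G.Walk a b → Prop
  | _, _, .nil _ => False
  | _, _, .cons t _ q => headAtEndAux t q

def noCollidersAux : LinkType → {a b : V} → G.Walk a b → Prop
  | _, _, _, .nil _ => True
  | t1, _, _, .cons t2 _ q => ¬ colliderAt t1 t2 ∧ noCollidersAux t2 q

/-- There is no collider on the walk. -/
def NoColliders : {a b : V} → G.Walk a b → Prop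
  | _, _, .nil _ => True
  | _, _, .cons t _ q => noCollidersAux t q

def collidersInAux (S : Set V) : LinkType → {a b : V} → G.Walk a b → Prop
  | _, _, _, .nil _ => True
  | t1, v, _, .cons t2 _ q => (colliderAt t1 t2 → v ∈ S) ∧ collidersInAux S t2 q

/-- Every collider on the walk lies in `S`. -/
def CollidersIn (S : Set V) : {a b : V} → G.Walk a b → Prop
  | _, _, .nil _ => True
  | _, _, .cons t _ q => collidersInAux S t q

def noncollUnblAux : (u : V) → LinkType → {b c : V} → G.Walk b c → Prop
  | _, _, _, _, .nil _ => True
  | u, t1, v, _, .cons t2 _ q =>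
      (¬ colliderAt t1 t2 → unblockableAt G u v q.first t1 t2) ∧ noncollUnblAux v t2 q

/-- Every interior non-collider on the walk is unblockable. -/
def NoncollidersUnblockable : {a b : V} → G.Walk a b → Prop
  | _, _, .nil _ => True
  | a, _, .cons t _ q => noncollUnblAux a t q

/-- The set of edges occurring on a walk (directed edges as ordered pairs in `E_d`,
bidirected edges as unordered pairs). -/
def edges : {a b : V} → G.Walk a b → Set ((V × V) ⊕ Sym2 V)
  | _, _, .nil _ => ∅
  | a, _, .cons t _ p =>
      insert (match t with
        | .fwd => Sum.inl (a, p.first)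
        | .bwd => Sum.inl (p.first, a)
        | .bi => Sum.inr s(a, p.first)) p.edges

/-- Concatenation of walks. -/
def append : {a b c : V} → G.Walk a b → G.Walk b c → G.Walk a c
  | _, _, _, .nil _, q => q
  | _, _, _, .cons t h p, q => .cons t h (p.append q)

/-- A walk `v_0, …, v_{n+1}` is a path if no node besides the final endpoint occurs more
than once, i.e. `v_0, …, v_n` are pairwise distinct. -/
def IsPath {a b : V} (p : G.Walk a b) : Prop := p.support.dropLast.Nodup

end DMG.Walk

/-- `A` is σ-separated from `B` given `C` in `G`: every walk from a node of `A` to a node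
of `B` is σ-blocked given `C`. -/
def DMG.sigmaSep (G : DMG V) (A B C : Set V) : Prop :=
  ∀ a ∈ A, ∀ b ∈ B, ∀ p : G.Walk a b, ¬ p.sigmaOpen C

/-- The lifted dependency graph of `G`, on two copies of `V`
(`Sum.inl` is the past copy `V_0`, `Sum.inr` the future copy `V_1`). -/
def DMG.lift (G : DMG V) : DMG (V ⊕ V) where
  Ed := {e | ∃ u v, (u, v) ∈ G.Ed ∧
        (e = (Sum.inl u, Sum.inl v) ∨ e = (Sum.inl u, Sum.inr v) ∨
         e = (Sum.inr u, Sum.inr v))}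
  Ebi := {e | ∃ u v, s(u, v) ∈ G.Ebi ∧
        (e = s(Sum.inl u, Sum.inl v) ∨ e = s(Sum.inl u, Sum.inr v) ∨
         e = s(Sum.inr u, Sum.inl v) ∨ e = s(Sum.inr u, Sum.inr v))}

/-- `B` is E-separated from `A` given `C` in `G`:
`A_0` is σ-separated from `B_1` given `C_0 ∪ (C_1 \ B_1)` in the lifted dependency graph. -/
def DMG.ESep (G : DMG V) (A B C : Set V) : Prop :=
  G.lift.sigmaSep (Sum.inl '' A) (Sum.inr '' B)
    ((Sum.inl '' C) ∪ ((Sum.inr '' C) \ (Sum.inr '' B)))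

/-- The independence model `I_E^G` of E-separation triples. -/
def DMG.IE (G : DMG V) : Set (Set V × Set V × Set V) :=
  {t | G.ESep t.1 t.2.1 t.2.2}


/-- The latent projection of `G` onto the observed nodes `O`: a directed edge when there is
a non-trivial directed walk whose interior nodes are all latent, and a bidirected edge when
there is a non-trivial collider-free walk with arrowheads at both endpoints whose interior
nodes are all latent. -/
def DMG.latentProj (G : DMG V) (O : Set V) : DMG O where
  Ed := {e | ∃ p : G.Walk e.1.val e.2.val,
          p.IsDirected ∧ 0 < p.length ∧ ∀ x ∈ p.interior, x ∉ O}
  Ebi := {e | ∃ u v : O, e = s(u, v) ∧ ∃ p : G.Walk u.val v.val,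
          p.headAtStart ∧ p.headAtEnd ∧ p.NoColliders ∧ 0 < p.length ∧
          ∀ x ∈ p.interior, x ∉ O}

/-- The last edge of the walk `p` before entering `scc_G(w)` has an arrowhead at its
endpoint in `scc_G(w)` (vacuous if the walk never leaves `scc_G(w)`). -/
def DMG.lastEdgeInto (G : DMG V) {a b : V} (w : V) (p : G.Walk a b) : Prop :=
  (∀ x ∈ p.support, x ∈ G.scc w) ∨
  ∃ (x y : V) (t : LinkType) (h : G.linkOK x y t) (p₁ : G.Walk a x) (p₂ : G.Walk y b),
    p = p₁.append (.cons t h p₂) ∧ x ∉ G.scc w ∧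
    (∀ z ∈ p₂.support, z ∈ G.scc w) ∧ t.headR

/-- An (asymmetric) inducing path from `v` to `w`: a non-trivial path such that every
collider on it is an ancestor of `v` or `w`, every interior non-collider is unblockable,
and the last edge before entering `scc_G(w)` points into `scc_G(w)`. -/
def DMG.IsInducingPath (G : DMG V) {v w : V} (p : G.Walk v w) : Prop :=
  0 < p.length ∧ p.IsPath ∧
  p.CollidersIn (G.anc {v, w}) ∧ p.NoncollidersUnblockable ∧ G.lastEdgeInto w p

section Helpers
variable {G : DMG V}

theorem link_ll {u b : V} {t : LinkType} (h : G.linkOK u b t) :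
    G.lift.linkOK (Sum.inl u) (Sum.inl b) t := by
  cases t
  · exact ⟨u, b, h, Or.inl rfl⟩
  · exact ⟨b, u, h, Or.inl rfl⟩
  · exact ⟨u, b, h, Or.inl rfl⟩

theorem link_lr {u b : V} {t : LinkType} (h : G.linkOK u b t) (ht : t.headR) :
    G.lift.linkOK (Sum.inl u) (Sum.inr b) t := by
  cases t
  · exact ⟨u, b, h, Or.inr (Or.inl rfl)⟩
  · exact ht.elim
  · exact ⟨u, b, h, Or.inr (Or.inl rfl)⟩

theorem anc_ll {u b : V} (h : G.ancestor u b) : G.lift.ancestor (Sum.inl u) (Sum.inl b) := by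
  induction h with
  | refl => exact Relation.ReflTransGen.refl
  | tail _ h ih => exact Relation.ReflTransGen.tail ih ⟨_, _, h, Or.inl rfl⟩

theorem anc_rr {u b : V} (h : G.ancestor u b) : G.lift.ancestor (Sum.inr u) (Sum.inr b) := by
  induction h with
  | refl => exact Relation.ReflTransGen.refl
  | tail _ h ih => exact Relation.ReflTransGen.tail ih ⟨_, _, h, Or.inr (Or.inr rfl)⟩

theorem scc_ll {u b : V} (h : u ∈ G.scc b) : Sum.inl u ∈ G.lift.scc (Sum.inl b) :=
  ⟨anc_ll h.1, anc_ll h.2⟩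

theorem scc_rr {u b : V} (h : u ∈ G.scc b) : Sum.inr u ∈ G.lift.scc (Sum.inr b) :=
  ⟨anc_rr h.1, anc_rr h.2⟩

/-- directed walk inside the future copy, within an scc -/
theorem future_walk (D : Set (V ⊕ V)) {y w : V} (h : G.ancestor y w) (h2 : G.ancestor w y) :
    ∃ q : G.lift.Walk (Sum.inr y) (Sum.inr w),
      ∀ (u : V ⊕ V) (t : LinkType), t.headR → q.sigmaOpenAux D u t := by
  induction h using Relation.ReflTransGen.head_induction_on with
  | refl => exact ⟨.nil _, fun _ _ _ => trivial⟩
  | @head a c hac hcw ih =>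
    obtain ⟨q, hq⟩ := ih (h2.trans (Relation.ReflTransGen.single hac))
    refine ⟨.cons .fwd ⟨a, c, hac, Or.inr (Or.inr rfl)⟩ q, fun u t ht => ⟨⟨?_, ?_⟩, ?_⟩⟩
    · intro hc; exact hc.2.elim
    · intro _ hn
      refine (hn ⟨?_, ?_⟩).elim
      · intro h; rw [LinkType.tailR] at h; subst h; exact ht.elim
      · intro _
        exact scc_rr ⟨Relation.ReflTransGen.trans hcw h2, Relation.ReflTransGen.single hac⟩
    · exact hq _ _ trivial

/-- directed walk in the past copy, crossing at the very end -/
theorem past_walk (D : Set (V ⊕ V)) (C : Set V) (hD : ∀ x, Sum.inl x ∈ D → x ∈ C)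
    {b w : V} (h : G.ancestor b w) (hne : b ≠ w) (hb : b ∉ G.anc C) :
    ∃ q : G.lift.Walk (Sum.inl b) (Sum.inr w),
      ∀ (u : V ⊕ V) (t : LinkType), q.sigmaOpenAux D u t := by
  induction h using Relation.ReflTransGen.head_induction_on with
  | refl => exact (hne rfl).elim
  | @head a c hac hcw ih =>
    have haC : Sum.inl a ∉ D := fun h => hb ⟨a, hD a h, Relation.ReflTransGen.refl⟩
    by_cases hcw' : c = w
    · subst hcw'
      exact ⟨.cons .fwd ⟨a, c, hac, Or.inr (Or.inl rfl)⟩ (.nil _), fun u t =>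
        ⟨⟨fun hc => hc.2.elim, fun _ _ => haC⟩, trivial⟩⟩
    · obtain ⟨q, hq⟩ := ih hcw'
        (fun ⟨x, hx, hcx⟩ => hb ⟨x, hx, Relation.ReflTransGen.head hac hcx⟩)
      exact ⟨.cons .fwd ⟨a, c, hac, Or.inl rfl⟩ q, fun u t =>
        ⟨⟨fun hc => hc.2.elim, fun _ _ => haC⟩, hq _ _⟩⟩

/-- prepend a reversed directed walk in the past copy -/
theorem back_walk (D : Set (V ⊕ V)) (C : Set V) (hD : ∀ x, Sum.inl x ∈ D → x ∈ C)
    {b v w : V} (h : G.ancestor b v) (hb : b ∉ G.anc C)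
    (r : G.lift.Walk (Sum.inl b) (Sum.inr w)) (hr : r.sigmaOpen D) :
    ∃ q : G.lift.Walk (Sum.inl v) (Sum.inr w), q.sigmaOpen D := by
  induction h using Relation.ReflTransGen.head_induction_on with
  | refl => exact ⟨r, hr⟩
  | @head a c hac hcw ih =>
    have haC : Sum.inl a ∉ D := fun h => hb ⟨a, hD a h, Relation.ReflTransGen.refl⟩
    refine ih (fun ⟨x, hx, hcx⟩ => hb ⟨x, hx, Relation.ReflTransGen.head hac hcx⟩)
      (.cons .bwd ⟨a, c, hac, Or.inl rfl⟩ r) ?_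
    cases r with
    | cons t h q => exact ⟨⟨fun hc => hc.1.elim, fun _ _ => haC⟩, hr⟩

/-- the induction invariant -/
def Inv (G : DMG V) (D : Set (V ⊕ V)) (C : Set V) (v w u : V) (t : LinkType) (b : V) : Prop :=
  (∃ r : G.lift.Walk (Sum.inl v) (Sum.inr w), r.sigmaOpen D) ∨
  ∃ B : V ⊕ V, G.lift.linkOK (Sum.inl u) B t ∧
    (t = .fwd → b ∈ G.scc u → B = Sum.inl b ∨ u ∉ C) ∧
    ∃ q : G.lift.Walk B (Sum.inr w), q.sigmaOpenAux D (Sum.inl u) t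

theorem Inv.step {D : Set (V ⊕ V)} {C : Set V} (hD : ∀ x, Sum.inl x ∈ D ↔ x ∈ C)
    {v w u b c : V} {t1 t2 : LinkType} (hl : G.linkOK u b t1)
    (hcol : colliderAt t1 t2 → b ∈ G.anc {v, w})
    (hnc : ¬ colliderAt t1 t2 → unblockableAt G u b c t1 t2)
    (h : Inv G D C v w b t2 c) : Inv G D C v w u t1 b := by
  rcases h with h | ⟨B, hB, hscc, q, hq⟩
  · exact Or.inl h
  by_cases hc : colliderAt t1 t2
  · by_cases hbC : b ∈ G.anc C
    · refine Or.inr ⟨Sum.inl b, link_ll hl, fun _ _ => Or.inl rfl, .cons t2 hB q,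
        ⟨⟨fun _ => ?_, fun h => (h hc).elim⟩, hq⟩⟩
      obtain ⟨x, hx, hbx⟩ := hbC
      exact ⟨Sum.inl x, (hD x).2 hx, anc_ll hbx⟩
    · obtain ⟨x, hx, hbx⟩ := hcol hc
      rcases hx with rfl | hx
      · exact Or.inl (back_walk D C (fun x => (hD x).1) hbx hbC (.cons t2 hB q) hq)
      · have hx : x = w := hx
        subst hx
        by_cases hbw : b = x
        · subst hbw
          refine Or.inr ⟨Sum.inr b, link_lr hl hc.1, fun _ hs => Or.inr fun hu => ?_,
            .nil _, trivial⟩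
          exact hbC ⟨u, hu, hs.1⟩
        · obtain ⟨q', hq'⟩ := past_walk D C (fun x => (hD x).1) hbx hbw hbC
          exact Or.inr ⟨Sum.inl b, link_ll hl, fun _ _ => Or.inl rfl, q', hq' _ _⟩
  · refine Or.inr ⟨Sum.inl b, link_ll hl, fun _ _ => Or.inl rfl, .cons t2 hB q,
        ⟨⟨fun h => (hc h).elim, fun _ hn hbD => hn ?_⟩, hq⟩⟩
    obtain ⟨h1, h2⟩ := hnc hc
    refine ⟨fun h => scc_ll (h1 h), fun h => ?_⟩
    have hs := h2 h
    rcases hscc h hs with rfl | hbC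
    · exact scc_ll hs
    · exact (hbC ((hD b).1 hbD)).elim

theorem Inv.walk {D : Set (V ⊕ V)} {C : Set V} (hD : ∀ x, Sum.inl x ∈ D ↔ x ∈ C)
    {v w x y : V} {t : LinkType} {h : G.linkOK x y t} (p₂ : G.Walk y w)
    (hxy : Inv G D C v w x t y) {b : V} (p₁ : G.Walk b x) :
    ∀ (u : V) (t1 : LinkType), G.linkOK u b t1 →
      DMG.Walk.collidersInAux (G.anc {v, w}) t1 (p₁.append (.cons t h p₂)) →
      DMG.Walk.noncollUnblAux u t1 (p₁.append (.cons t h p₂)) →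
      Inv G D C v w u t1 b := by
  induction p₁ with
  | nil a => exact fun u t1 hl hc hn => Inv.step hD hl hc.1 hn.1 hxy
  | cons t2 h2 q ih =>
    exact fun u t1 hl hc hn => Inv.step hD hl hc.1 hn.1 (ih hxy _ _ h2 hc.2 hn.2)

theorem Inv.finish {D : Set (V ⊕ V)} {C : Set V} {v w : V} {t : LinkType} {b : V}
    (h : Inv G D C v w v t b) :
    ∃ r : G.lift.Walk (Sum.inl v) (Sum.inr w), r.sigmaOpen D := by
  rcases h with h | ⟨B, hB, _, q, hq⟩
  · exact h
  · exact ⟨.cons t hB q, hq⟩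

theorem first_mem {a b : V} (p : G.Walk a b) : a ∈ p.support := by
  cases p <;> simp [DMG.Walk.support]

theorem directed_open (D : Set (V ⊕ V)) {v a w : V} {t : LinkType} (ht : t.headR)
    (h : G.linkOK v a t) (h1 : G.ancestor a w) (h2 : G.ancestor w a) :
    ∃ r : G.lift.Walk (Sum.inl v) (Sum.inr w), r.sigmaOpen D := by
  obtain ⟨q, hq⟩ := future_walk D h1 h2
  exact ⟨.cons t (link_lr h ht) q, hq _ _ ht⟩

theorem scc_open (D : Set (V ⊕ V)) {v w : V} (p : G.Walk v w) (hl : 0 < p.length)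
    (hs : ∀ x ∈ p.support, x ∈ G.scc w) :
    ∃ r : G.lift.Walk (Sum.inl v) (Sum.inr w), r.sigmaOpen D := by
  have hv := hs v (first_mem p)
  cases p with
  | nil => simp [DMG.Walk.length] at hl
  | @cons _ a _ t h q =>
    have ha : a ∈ G.scc w := hs a (by simp [DMG.Walk.support, first_mem])
    by_cases ht : t.headR
    · exact directed_open D ht h ha.1 ha.2
    · have ht' : t = .bwd := by
        cases t
        · exact (ht trivial).elim
        · rfl
        · exact (ht trivial).elim
      subst ht'
      have hav : (a, v) ∈ G.Ed := h
      rcases Relation.ReflTransGen.cases_head (hv.1.trans ha.2) with hva | ⟨c, hvc, hca⟩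
      · subst hva
        exact directed_open D (t := .fwd) trivial h ha.1 ha.2
      · exact directed_open D (t := .fwd) trivial hvc (Relation.ReflTransGen.trans hca ha.1)
          (hv.2.trans (Relation.ReflTransGen.single hvc))

end Helpers

/-- An (asymmetric) inducing path from `v` to `w` makes `w` inseparable from `v` in the
independence model `I_E`. -/
theorem inducing_path_inseparable {V : Type} [Fintype V] (G : DMG V) (v w : V)
    (p : G.Walk v w) (hp : G.IsInducingPath p) (C : Set V) (hC : v ∉ C) :
    (({v} : Set V), ({w} : Set V), C) ∉ G.IE := by
  intro hE
  obtain ⟨hlen, -, hcol, hnc, hlast⟩ := hp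
  have hD : ∀ x, (Sum.inl x : V ⊕ V) ∈
      ((Sum.inl '' C) ∪ ((Sum.inr '' C) \ (Sum.inr '' {w})) : Set (V ⊕ V)) ↔ x ∈ C := by
    intro x; simp
  suffices hw : ∃ r : G.lift.Walk (Sum.inl v) (Sum.inr w),
      r.sigmaOpen ((Sum.inl '' C) ∪ ((Sum.inr '' C) \ (Sum.inr '' {w}))) by
    obtain ⟨r, hr⟩ := hw
    exact hE _ ⟨v, rfl, rfl⟩ _ ⟨w, rfl, rfl⟩ r hr
  rcases hlast with hs | ⟨x, y, t, h, p₁, p₂, rfl, hx, hz, ht⟩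
  · exact scc_open _ p hlen hs
  · have hy := hz y (first_mem p₂)
    cases p₁ with
    | nil => exact directed_open _ ht h hy.1 hy.2
    | cons t1 h1 q =>
      obtain ⟨r, hr⟩ := future_walk (G := G)
        ((Sum.inl '' C) ∪ ((Sum.inr '' C) \ (Sum.inr '' {w}))) hy.1 hy.2
      refine Inv.finish (Inv.walk hD p₂ (Or.inr ⟨Sum.inr y, link_lr h ht, ?_, r, hr _ _ ht⟩)
        q v t1 h1 hcol hnc)
      intro _ hyx
      exact (hx ⟨hyx.2.trans hy.1, hy.2.trans hyx.1⟩).elim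

end ESepPaper
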